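/- arXiv:2503.16014 — 2 statements merged into one kernel-verified Lean document; each statement's English description precedes it below -/
import Mathlib

section
/- Under the causal model G1, fix 2 ≤ t ≤ t+k ≤ T and an intervention value x* applied only at time t. Let C1 range over configurations c = (x_{t+1:t+k}, w_{t:t+k}, v_{t:t+k}, z_{t−1}, S_{t−1}). Assuming that P(x_t = x*, c) > 0 for every configuration c with P(c) > 0, the interventional marginal satisfies, for every value y: P(y_{t+k} = y | do(x_t = x*)) = Σ_c P(y_{t+k} = y | x_t = x*, c) P(c) = Σ_c [ Σ_{y_{t:t+k−1}, z_{t:t+k}} ∏_{j=t}^{t+k} b_j(y_j | z_j, x_j, v_j, y_{j−1}) a_j(z_j | x_j, w_j, z_{j−1}, y_{j−1}) ] P(c), where in the inner sum y_{t+k} = y is held fixed, x_t = x*, and x_{t+1:t+k} take the values given in c. -/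
open Finset

/-- A trajectory of the six processes (u, x, v, w, z, y) over times 1..T; index 0 of
`Fin (T+1)` is a dummy time whose value is pinned to `default` by the joint pmf. -/
structure Traj (U X V W Z Y : Type) (T : ℕ) where
  u : Fin (T + 1) → U
  x : Fin (T + 1) → X
  v : Fin (T + 1) → V
  w : Fin (T + 1) → W
  z : Fin (T + 1) → Z
  y : Fin (T + 1) → Y

/-- Trajectories are equivalent to a finite product of function types. -/
def trajEquiv (U X V W Z Y : Type) (T : ℕ) :
    Traj U X V W Z Y T ≃
      (Fin (T + 1) → U) × (Fin (T + 1) → X) × (Fin (T + 1) → V) × (Fin (T + 1) → W) ×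
        (Fin (T + 1) → Z) × (Fin (T + 1) → Y) where
  toFun τ := (τ.u, τ.x, τ.v, τ.w, τ.z, τ.y)
  invFun p := ⟨p.1, p.2.1, p.2.2.1, p.2.2.2.1, p.2.2.2.2.1, p.2.2.2.2.2⟩
  left_inv τ := rfl
  right_inv p := rfl

instance {U X V W Z Y : Type} {T : ℕ}
    [Fintype U] [Fintype X] [Fintype V] [Fintype W] [Fintype Z] [Fintype Y]
    [DecidableEq U] [DecidableEq X] [DecidableEq V] [DecidableEq W] [DecidableEq Z]
    [DecidableEq Y] : Fintype (Traj U X V W Z Y T) :=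
  Fintype.ofEquiv _ (trajEquiv U X V W Z Y T).symm

instance {U X V W Z Y : Type} {T : ℕ}
    [DecidableEq U] [DecidableEq X] [DecidableEq V] [DecidableEq W] [DecidableEq Z]
    [DecidableEq Y] : DecidableEq (Traj U X V W Z Y T) := fun a b =>
  decidable_of_iff
    (a.u = b.u ∧ a.x = b.x ∧ a.v = b.v ∧ a.w = b.w ∧ a.z = b.z ∧ a.y = b.y)
    (by cases a; cases b; simp)

/-- Time index t as an element of `Fin (T+1)` (defined for all naturals via truncation;
only used for t ≤ T). -/
def idx (T t : ℕ) : Fin (T + 1) := ⟨min t T, Nat.lt_succ_of_le (min_le_right t T)⟩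

open Classical in
/-- Probability of an event under a pmf on a finite type. -/
noncomputable def pr {α : Type*} [Fintype α] (p : α → ℝ) (E : α → Prop) : ℝ :=
  ∑ a, if E a then p a else 0

/-- Conditional probability P(E | F) = P(E ∧ F) / P(F). -/
noncomputable def cpr {α : Type*} [Fintype α] (p : α → ℝ) (E F : α → Prop) : ℝ :=
  pr p (fun a => E a ∧ F a) / pr p F

variable {U X V W Z Y : Type}
  [Fintype U] [Fintype X] [Fintype V] [Fintype W] [Fintype Z] [Fintype Y]
  [DecidableEq U] [DecidableEq X] [DecidableEq V] [DecidableEq W] [DecidableEq Z] [DecidableEq Y]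
  [Inhabited U] [Inhabited X] [Inhabited V] [Inhabited W] [Inhabited Z] [Inhabited Y]

/-- Joint pmf of the causal model G1:
P = q_1(u_1) ∏_{t=2}^T q_u(u_t|u_{t-1}) ∏_{t=1}^T q_x(x_t|u_t) q_v(v_t|u_t) q_w(w_t|u_t)
  · a_1(z_1|x_1,w_1) b_1(y_1|z_1,x_1,v_1)
  · ∏_{t=2}^T a_t(z_t|x_t,w_t,z_{t-1},y_{t-1}) b_t(y_t|z_t,x_t,v_t,y_{t-1});
the dummy time-0 coordinates are pinned to `default` so that this is a pmf. -/
noncomputable def jointG1 (T : ℕ)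
    (q1 : U → ℝ) (qu : U → U → ℝ) (qx : X → U → ℝ) (qv : V → U → ℝ) (qw : W → U → ℝ)
    (a1 : Z → X → W → ℝ) (b1 : Y → Z → X → V → ℝ)
    (a : ℕ → Z → X → W → Z → Y → ℝ) (b : ℕ → Y → Z → X → V → Y → ℝ)
    (τ : Traj U X V W Z Y T) : ℝ :=
  (if τ.u (idx T 0) = default ∧ τ.x (idx T 0) = default ∧ τ.v (idx T 0) = default ∧
      τ.w (idx T 0) = default ∧ τ.z (idx T 0) = default ∧ τ.y (idx T 0) = default
    then 1 else 0) *
  (q1 (τ.u (idx T 1)) * ∏ j ∈ Finset.Icc 2 T, qu (τ.u (idx T j)) (τ.u (idx T (j - 1)))) *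
  (∏ j ∈ Finset.Icc 1 T,
    (qx (τ.x (idx T j)) (τ.u (idx T j)) * qv (τ.v (idx T j)) (τ.u (idx T j)) *
      qw (τ.w (idx T j)) (τ.u (idx T j)))) *
  (a1 (τ.z (idx T 1)) (τ.x (idx T 1)) (τ.w (idx T 1)) *
    b1 (τ.y (idx T 1)) (τ.z (idx T 1)) (τ.x (idx T 1)) (τ.v (idx T 1)) *
    ∏ j ∈ Finset.Icc 2 T,
      (a j (τ.z (idx T j)) (τ.x (idx T j)) (τ.w (idx T j)) (τ.z (idx T (j - 1)))
          (τ.y (idx T (j - 1))) *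
        b j (τ.y (idx T j)) (τ.z (idx T j)) (τ.x (idx T j)) (τ.v (idx T j))
          (τ.y (idx T (j - 1)))))

/-- Interventional pmf of G1 under do(x_j = xs j) for j ∈ J: the truncated factorization,
with the factors q_x(x_j | u_j), j ∈ J, deleted and x_j fixed to xs j. -/
noncomputable def doxG1 (T : ℕ) (J : Finset ℕ) (xs : ℕ → X)
    (q1 : U → ℝ) (qu : U → U → ℝ) (qx : X → U → ℝ) (qv : V → U → ℝ) (qw : W → U → ℝ)
    (a1 : Z → X → W → ℝ) (b1 : Y → Z → X → V → ℝ)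
    (a : ℕ → Z → X → W → Z → Y → ℝ) (b : ℕ → Y → Z → X → V → Y → ℝ)
    (τ : Traj U X V W Z Y T) : ℝ :=
  (if τ.u (idx T 0) = default ∧ τ.x (idx T 0) = default ∧ τ.v (idx T 0) = default ∧
      τ.w (idx T 0) = default ∧ τ.z (idx T 0) = default ∧ τ.y (idx T 0) = default
    then 1 else 0) *
  (q1 (τ.u (idx T 1)) * ∏ j ∈ Finset.Icc 2 T, qu (τ.u (idx T j)) (τ.u (idx T (j - 1)))) *
  (∏ j ∈ Finset.Icc 1 T,
    ((if j ∈ J then (if τ.x (idx T j) = xs j then 1 else 0)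
      else qx (τ.x (idx T j)) (τ.u (idx T j))) *
      qv (τ.v (idx T j)) (τ.u (idx T j)) * qw (τ.w (idx T j)) (τ.u (idx T j)))) *
  (a1 (τ.z (idx T 1)) (τ.x (idx T 1)) (τ.w (idx T 1)) *
    b1 (τ.y (idx T 1)) (τ.z (idx T 1)) (τ.x (idx T 1)) (τ.v (idx T 1)) *
    ∏ j ∈ Finset.Icc 2 T,
      (a j (τ.z (idx T j)) (τ.x (idx T j)) (τ.w (idx T j)) (τ.z (idx T (j - 1)))
          (τ.y (idx T (j - 1))) *
        b j (τ.y (idx T j)) (τ.z (idx T j)) (τ.x (idx T j)) (τ.v (idx T j))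
          (τ.y (idx T (j - 1)))))

/-- The event that the trajectory agrees with the given past values
S_{t-1} = (y_{1:t-1}, x_{1:t-1}, v_{1:t-1}, w_{1:t-1}); histories are indexed by `Fin t`
with index j standing for time j (index 0 being the pinned dummy time). -/
def histEv (T t : ℕ) (τ : Traj U X V W Z Y T)
    (hy : Fin t → Y) (hx : Fin t → X) (hv : Fin t → V) (hw : Fin t → W) : Prop :=
  (∀ j : Fin t, τ.y (idx T j.val) = hy j) ∧ (∀ j : Fin t, τ.x (idx T j.val) = hx j) ∧
    (∀ j : Fin t, τ.v (idx T j.val) = hv j) ∧ (∀ j : Fin t, τ.w (idx T j.val) = hw j)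

/-- Extend a tuple g of intermediate values (index i of `Fin k` is time t+i, for a block
of times t..t+k) by a fixed value `last` at the final index. -/
def extWith {β : Type*} (k : ℕ) (g : Fin k → β) (last : β) (i : Fin (k + 1)) : β :=
  if h : i.val < k then g ⟨i.val, h⟩ else last

/-- The "previous value" map for a block of times t..t+k: at the first index it is
`first` (the value at time t-1), and at index i ≥ 1 it is g (i-1). -/
def shiftFirst {β : Type*} (k : ℕ) (first : β) (g : Fin k → β) (i : Fin (k + 1)) : β :=
  if h : i.val = 0 then first else g ⟨i.val - 1, by have := i.isLt; omega⟩

section Helpers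

/-- Previous value along a finite path with a given start value. -/
def prevOf {S : Type} {n : ℕ} (s0 : S) (g : Fin n → S) (i : Fin n) : S :=
  if i.val = 0 then s0 else g ⟨i.val - 1, by have := i.isLt; omega⟩

/-- Weight of a path under time-inhomogeneous kernels. -/
noncomputable def chainW {S : Type} (κ : ℕ → S → S → ℝ) (c : ℕ) (s0 : S) {n : ℕ}
    (g : Fin n → S) : ℝ :=
  ∏ i : Fin n, κ (c + i.val) (g i) (prevOf s0 g i)

/-- Concatenation of finite paths. -/
def joinP {S : Type} {m n N : ℕ} (h : N = m + n) (p : Fin m → S) (q : Fin n → S)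
    (i : Fin N) : S :=
  if hi : i.val < m then p ⟨i.val, hi⟩ else q ⟨i.val - m, by have := i.isLt; omega⟩

theorem sum_joinP {S : Type} [Fintype S] {m n N : ℕ} (h : N = m + n)
    (f : (Fin N → S) → ℝ) :
    ∑ s, f s = ∑ p : Fin m → S, ∑ q : Fin n → S, f (joinP h p q) := by
  rw [← Fintype.sum_prod_type' (f := fun p q => f (joinP h p q))]
  symm
  refine Fintype.sum_equiv
    { toFun := fun pq => joinP h pq.1 pq.2
      invFun := fun s => (fun i => s ⟨i.val, by have := i.isLt; omega⟩,
        fun i => s ⟨m + i.val, by have := i.isLt; omega⟩)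
      left_inv := ?_
      right_inv := ?_ } _ _ (fun _ => rfl)
  · rintro ⟨p, q⟩
    ext i <;> simp [joinP]
  · intro s
    ext i
    simp only [joinP]
    split_ifs with hi
    · rfl
    · congr 1; ext; simp; omega

theorem chainW_joinP {S : Type} (κ : ℕ → S → S → ℝ) (c : ℕ) (s0 : S) {m n N : ℕ}
    (h : N = m + n) (hm : 0 < m) (p : Fin m → S) (q : Fin n → S) :
    chainW κ c s0 (joinP h p q) =
      chainW κ c s0 p * chainW κ (c + m) (p ⟨m - 1, by omega⟩) q := by
  subst h
  unfold chainW
  rw [Fin.prod_univ_add]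
  congr 1
  · refine Finset.prod_congr rfl fun i _ => ?_
    have h1 : joinP rfl p q (Fin.castAdd n i) = p i := by simp [joinP]
    have h2 : prevOf s0 (joinP rfl p q) (Fin.castAdd n i) = prevOf s0 p i := by
      have := i.isLt
      simp only [prevOf, joinP, Fin.val_castAdd]
      split_ifs with h1 h2
      · rfl
      · rfl
      · omega
    rw [h1, h2]; rfl
  · refine Finset.prod_congr rfl fun i _ => ?_
    have h1 : joinP rfl p q (Fin.natAdd m i) = q i := by simp [joinP]
    have h2 : prevOf s0 (joinP rfl p q) (Fin.natAdd m i) =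
        prevOf (p ⟨m - 1, by omega⟩) q i := by
      have := i.isLt
      simp only [prevOf, joinP, Fin.val_natAdd]
      split_ifs with h1 h2 h3 h4 h5
      · omega
      · omega
      · congr 1; ext; simp; omega
      · omega
      · omega
      · congr 1; ext; simp; omega
    rw [h1, h2]; simp [add_assoc]

theorem sum_chainW {S : Type} [Fintype S] (κ : ℕ → S → S → ℝ) (n : ℕ) : ∀ (c : ℕ) (s0 : S)
    (_ : ∀ i, i < n → ∀ s, ∑ s', κ (c + i) s' s = 1),
    ∑ g : Fin n → S, chainW κ c s0 g = 1 := by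
  induction n with
  | zero => intro c s0 _; simp [chainW]
  | succ n ih =>
    intro c s0 hk
    rw [sum_joinP (show n + 1 = 1 + n by omega)]
    simp_rw [chainW_joinP κ c s0 (show n + 1 = 1 + n by omega) one_pos, ← Finset.mul_sum]
    have : ∀ p : Fin 1 → S, ∑ q : Fin n → S, chainW κ (c + 1) (p ⟨1 - 1, by omega⟩) q = 1 :=
      fun p => ih _ _ (fun i hi s => by
        have := hk (i + 1) (by omega) s
        rwa [show c + (i + 1) = c + 1 + i by omega] at this)
    simp_rw [this, mul_one]
    rw [← hk 0 (by omega) s0]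
    refine Fintype.sum_equiv (Equiv.funUnique (Fin 1) S) _ _ fun p => ?_
    simp [chainW, prevOf]

theorem idx_eq (T j : ℕ) (h : j ≤ T) : idx T j = ⟨j, by omega⟩ := by
  ext; simp [idx, h]

theorem markov_sum {S : Type} [Fintype S] (κ : ℕ → S → S → ℝ) (T t k : ℕ) (s0 : S)
    (ht : 0 < t) (htk : t + k ≤ T) (hκ : ∀ j, j ≤ T → ∀ s, ∑ s', κ j s' s = 1)
    (φ : (Fin t → S) → ℝ) (ψ : S → ℝ) :
    ∑ s : Fin (T + 1) → S, chainW κ 0 s0 s * (φ (fun i => s (idx T i.val)) *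
        ψ (s (idx T (t + k)))) =
      ∑ p : Fin t → S, chainW κ 0 s0 p * φ p *
        ∑ g : Fin (k + 1) → S, chainW κ t (p ⟨t - 1, by omega⟩) g * ψ (g (Fin.last k)) := by
  have hN : T + 1 = t + (T + 1 - t) := by omega
  have hM : T + 1 - t = (k + 1) + (T - t - k) := by omega
  rw [sum_joinP hN]
  refine Finset.sum_congr rfl fun p _ => ?_
  rw [sum_joinP hM, Finset.mul_sum]
  refine Finset.sum_congr rfl fun g _ => ?_
  simp_rw [chainW_joinP κ 0 s0 hN ht, chainW_joinP κ _ _ hM (Nat.succ_pos k)]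
  have h1 : ∀ h, (fun i : Fin t => joinP hN p (joinP hM g h) (idx T i.val)) = p := by
    intro h
    ext i
    have := i.isLt
    rw [idx_eq T i.val (by omega)]
    simp only [joinP]
    rw [dif_pos (by omega)]
  have h2 : ∀ h, joinP hN p (joinP hM g h) (idx T (t + k)) = g (Fin.last k) := by
    intro h
    rw [idx_eq T (t + k) htk]
    simp only [joinP]
    rw [dif_neg (by omega), dif_pos (by omega)]
    congr 1; ext; simp
  simp_rw [h1, h2]
  have h3 := sum_chainW κ (T - t - k) (0 + t + (k + 1)) (g ⟨k + 1 - 1, by omega⟩)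
    (fun i hi s => hκ _ (by omega) s)
  calc _ = chainW κ 0 s0 p * chainW κ (0 + t) (p ⟨t - 1, by omega⟩) g * φ p *
        ψ (g (Fin.last k)) * ∑ h : Fin (T - t - k) → S,
          chainW κ (0 + t + (k + 1)) (g ⟨k + 1 - 1, by omega⟩) h := by
        rw [Finset.mul_sum]; exact Finset.sum_congr rfl fun h _ => by ring
    _ = _ := by rw [h3, zero_add]; ring

theorem sum_extWith {β : Type} [Fintype β] (k : ℕ) (f : (Fin (k + 1) → β) → ℝ) :
    ∑ g, f g = ∑ gy : Fin k → β, ∑ l, f (extWith k gy l) := by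
  rw [sum_joinP (rfl : k + 1 = k + 1)]
  refine Finset.sum_congr rfl fun p _ => ?_
  refine Fintype.sum_equiv (Equiv.funUnique (Fin 1) β) _ _ fun q => ?_
  congr 1
  ext i
  have := i.isLt
  simp only [joinP, extWith]
  split_ifs with h
  · rfl
  · simp only [Equiv.funUnique_apply]; congr 1; ext; simp; omega

theorem sum_one_coord {ι A : Type} [Fintype ι] [DecidableEq ι] [Fintype A] [DecidableEq A]
    (i : ι) (x0 : A) (f : A → ℝ) (R : (ι → A) → ℝ)
    (hR : ∀ x a', R (Function.update x i a') = R x) :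
    ∑ x, f (x i) * R x = (∑ a', f a') * ∑ x : ι → A, (if x i = x0 then 1 else 0) * R x := by
  have key : ∀ f : A → ℝ, ∑ x, f (x i) * R x =
      (∑ a', f a') * ∑ r : {j // j ≠ i} → A, R ((Equiv.funSplitAt i A).symm (x0, r)) := by
    intro f
    rw [Finset.sum_mul_sum, ← Fintype.sum_prod_type']
    refine Fintype.sum_equiv (Equiv.funSplitAt i A) _ _ fun x => ?_
    have : (Equiv.funSplitAt i A).symm (x0, ((Equiv.funSplitAt i A) x).2) =
        Function.update x i x0 := by
      ext j
      by_cases h : j = i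
      · subst h; simp [Equiv.funSplitAt, Equiv.piSplitAt]
      · simp [Equiv.funSplitAt, Equiv.piSplitAt, h]
    rw [this, hR]; rfl
  rw [key f, key (fun a' => if a' = x0 then 1 else 0)]
  simp

/-- Regrouping of the coordinates of a trajectory. -/
def trajEquivP (U X V W Z Y : Type) (T : ℕ) :
    Traj U X V W Z Y T ≃
      (Fin (T + 1) → U) × (Fin (T + 1) → V) × (Fin (T + 1) → W) × (Fin (T + 1) → X) ×
        (Fin (T + 1) → Z × Y) where
  toFun τ := (τ.u, τ.v, τ.w, τ.x, fun i => (τ.z i, τ.y i))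
  invFun p := ⟨p.1, p.2.2.2.1, p.2.1, p.2.2.1, fun i => (p.2.2.2.2 i).1,
    fun i => (p.2.2.2.2 i).2⟩
  left_inv _ := rfl
  right_inv _ := rfl

theorem sum_traj {U X V W Z Y : Type} {T : ℕ}
    [Fintype U] [Fintype X] [Fintype V] [Fintype W] [Fintype Z] [Fintype Y]
    [DecidableEq U] [DecidableEq X] [DecidableEq V] [DecidableEq W] [DecidableEq Z]
    [DecidableEq Y] (f : Traj U X V W Z Y T → ℝ) :
    ∑ τ, f τ = ∑ u, ∑ v, ∑ w, ∑ x, ∑ s : Fin (T + 1) → Z × Y,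
      f ⟨u, x, v, w, fun i => (s i).1, fun i => (s i).2⟩ := by
  rw [← (trajEquivP U X V W Z Y T).symm.sum_comp]
  simp only [Fintype.sum_prod_type]
  rfl

theorem pr_partition {α C : Type*} [Fintype α] [Fintype C] (p : α → ℝ) (E : α → Prop)
    (π : α → C) : pr p E = ∑ c, pr p (fun τ => E τ ∧ π τ = c) := by
  classical
  simp only [pr]
  rw [Finset.sum_comm]
  refine Finset.sum_congr rfl fun τ _ => ?_
  by_cases h : E τ <;> simp [h]

end Helpers

section Model

theorem idx_ne (T i j : ℕ) (hi : i ≤ T) (hj : j ≤ T) (h : i ≠ j) : idx T i ≠ idx T j := by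
  rw [idx_eq T i hi, idx_eq T j hj]
  simpa using h

/-- Kernel of the (z, y) process given the exogenous trajectories; time 0 is pinned. -/
noncomputable def kerG1 {X V W Z Y : Type} [DecidableEq Z] [DecidableEq Y]
    [Inhabited Z] [Inhabited Y] (T : ℕ)
    (a1 : Z → X → W → ℝ) (b1 : Y → Z → X → V → ℝ)
    (a : ℕ → Z → X → W → Z → Y → ℝ) (b : ℕ → Y → Z → X → V → Y → ℝ)
    (x : Fin (T + 1) → X) (v : Fin (T + 1) → V) (w : Fin (T + 1) → W)
    (j : ℕ) (s' s : Z × Y) : ℝ :=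
  if j = 0 then (if s'.1 = default ∧ s'.2 = default then 1 else 0)
  else if j = 1 then a1 s'.1 (x (idx T 1)) (w (idx T 1)) *
    b1 s'.2 s'.1 (x (idx T 1)) (v (idx T 1))
  else a j s'.1 (x (idx T j)) (w (idx T j)) s.1 s.2 *
    b j s'.2 s'.1 (x (idx T j)) (v (idx T j)) s.2

/-- The exogenous weight without the factor of `x_t`. -/
noncomputable def exoG1 {U X V W : Type} [DecidableEq U] [DecidableEq X] [DecidableEq V]
    [DecidableEq W] [Inhabited U] [Inhabited X] [Inhabited V] [Inhabited W] (T t : ℕ)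
    (q1 : U → ℝ) (qu : U → U → ℝ) (qx : X → U → ℝ) (qv : V → U → ℝ) (qw : W → U → ℝ)
    (u : Fin (T + 1) → U) (v : Fin (T + 1) → V) (w : Fin (T + 1) → W)
    (x : Fin (T + 1) → X) : ℝ :=
  (if u (idx T 0) = default ∧ x (idx T 0) = default ∧ v (idx T 0) = default ∧
      w (idx T 0) = default then 1 else 0) *
  (q1 (u (idx T 1)) * ∏ j ∈ Finset.Icc 2 T, qu (u (idx T j)) (u (idx T (j - 1)))) *
  ((∏ j ∈ (Finset.Icc 1 T).erase t, qx (x (idx T j)) (u (idx T j))) *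
  (∏ j ∈ Finset.Icc 1 T, qv (v (idx T j)) (u (idx T j))) *
  (∏ j ∈ Finset.Icc 1 T, qw (w (idx T j)) (u (idx T j))))

theorem kerG1_sum {X V W Z Y : Type} [Fintype Z] [Fintype Y] [DecidableEq Z] [DecidableEq Y]
    [Inhabited Z] [Inhabited Y] (T : ℕ)
    (a1 : Z → X → W → ℝ) (b1 : Y → Z → X → V → ℝ)
    (a : ℕ → Z → X → W → Z → Y → ℝ) (b : ℕ → Y → Z → X → V → Y → ℝ)
    (ha1 : ∀ x0 w0, (∑ z', a1 z' x0 w0) = 1)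
    (hb1 : ∀ z0 x0 v0, (∑ y', b1 y' z0 x0 v0) = 1)
    (ha : ∀ j, 2 ≤ j → j ≤ T → ∀ x0 w0 z0 y0, (∑ z', a j z' x0 w0 z0 y0) = 1)
    (hb : ∀ j, 2 ≤ j → j ≤ T → ∀ z0 x0 v0 y0, (∑ y', b j y' z0 x0 v0 y0) = 1)
    (x : Fin (T + 1) → X) (v : Fin (T + 1) → V) (w : Fin (T + 1) → W)
    (j : ℕ) (hj : j ≤ T) (s : Z × Y) : ∑ s', kerG1 T a1 b1 a b x v w j s' s = 1 := by
  unfold kerG1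
  by_cases h0 : j = 0
  · simp [h0, Fintype.sum_prod_type, ite_and]
  by_cases h1 : j = 1
  · simp [h1, Fintype.sum_prod_type, ← Finset.mul_sum, ha1, hb1]
  · simp [h0, h1, Fintype.sum_prod_type, ← Finset.mul_sum, ha j (by omega) hj,
      hb j (by omega) hj]

theorem chainW_ker {X V W Z Y : Type} [DecidableEq Z] [DecidableEq Y]
    [Inhabited Z] [Inhabited Y] (T : ℕ) (hT : 1 ≤ T)
    (a1 : Z → X → W → ℝ) (b1 : Y → Z → X → V → ℝ)
    (a : ℕ → Z → X → W → Z → Y → ℝ) (b : ℕ → Y → Z → X → V → Y → ℝ)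
    (x : Fin (T + 1) → X) (v : Fin (T + 1) → V) (w : Fin (T + 1) → W)
    (s : Fin (T + 1) → Z × Y) :
    chainW (kerG1 T a1 b1 a b x v w) 0 default s =
      (if (s (idx T 0)).1 = default ∧ (s (idx T 0)).2 = default then 1 else 0) *
      (a1 (s (idx T 1)).1 (x (idx T 1)) (w (idx T 1)) *
      b1 (s (idx T 1)).2 (s (idx T 1)).1 (x (idx T 1)) (v (idx T 1)) *
      ∏ j ∈ Finset.Icc 2 T,
      (a j (s (idx T j)).1 (x (idx T j)) (w (idx T j)) (s (idx T (j - 1))).1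
          (s (idx T (j - 1))).2 *
        b j (s (idx T j)).2 (s (idx T j)).1 (x (idx T j)) (v (idx T j))
          (s (idx T (j - 1))).2)) := by
  have h1 : chainW (kerG1 T a1 b1 a b x v w) 0 default s =
      ∏ i : Fin (T + 1), (fun j => kerG1 T a1 b1 a b x v w j (s (idx T j))
        (s (idx T (j - 1)))) i.val := by
    unfold chainW
    refine Finset.prod_congr rfl fun i _ => ?_
    have hi := i.isLt
    simp only [zero_add]
    rw [idx_eq T i.val (by omega), idx_eq T (i.val - 1) (by omega)]
    by_cases h0 : i.val = 0
    · unfold kerG1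
      rw [if_pos h0, if_pos h0]
    · simp [prevOf, h0]
  rw [h1, Fin.prod_univ_eq_prod_range (fun j => kerG1 T a1 b1 a b x v w j (s (idx T j))
        (s (idx T (j - 1)))) (T + 1), Finset.range_eq_Ico,
    Finset.prod_eq_prod_Ico_succ_bot (by omega), Finset.prod_eq_prod_Ico_succ_bot (by omega)]
  have h2 : Finset.Ico (0 + 1 + 1) (T + 1) = Finset.Icc 2 T := by ext; simp
  rw [h2]
  congr 1
  congr 1
  refine Finset.prod_congr rfl fun j hj => ?_
  have := Finset.mem_Icc.1 hj
  simp [kerG1, show j ≠ 0 by omega, show j ≠ 1 by omega]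

theorem joint_eq {U X V W Z Y : Type}
    [DecidableEq U] [DecidableEq X] [DecidableEq V] [DecidableEq W] [DecidableEq Z]
    [DecidableEq Y]
    [Inhabited U] [Inhabited X] [Inhabited V] [Inhabited W] [Inhabited Z] [Inhabited Y]
    (T t : ℕ) (ht2 : 2 ≤ t) (htT : t ≤ T)
    (q1 : U → ℝ) (qu : U → U → ℝ) (qx : X → U → ℝ) (qv : V → U → ℝ) (qw : W → U → ℝ)
    (a1 : Z → X → W → ℝ) (b1 : Y → Z → X → V → ℝ)
    (a : ℕ → Z → X → W → Z → Y → ℝ) (b : ℕ → Y → Z → X → V → Y → ℝ)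
    (u : Fin (T + 1) → U) (v : Fin (T + 1) → V) (w : Fin (T + 1) → W)
    (x : Fin (T + 1) → X) (s : Fin (T + 1) → Z × Y) :
    jointG1 T q1 qu qx qv qw a1 b1 a b ⟨u, x, v, w, fun i => (s i).1, fun i => (s i).2⟩ =
      (qx (x (idx T t)) (u (idx T t)) * exoG1 T t q1 qu qx qv qw u v w x) *
        chainW (kerG1 T a1 b1 a b x v w) 0 default s := by
  rw [chainW_ker T (by omega)]
  unfold jointG1 exoG1
  rw [Finset.prod_mul_distrib, Finset.prod_mul_distrib,
    ← Finset.mul_prod_erase (Finset.Icc 1 T) _ (Finset.mem_Icc.2 ⟨by omega, htT⟩ : t ∈ _)]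
  have : ∀ A B C D E F : Prop, ∀ [Decidable A] [Decidable B] [Decidable C] [Decidable D]
      [Decidable E] [Decidable F], (if A ∧ B ∧ C ∧ D ∧ E ∧ F then (1:ℝ) else 0) =
      (if A ∧ B ∧ C ∧ D then 1 else 0) * (if E ∧ F then 1 else 0) := by
    intros; split_ifs <;> first | tauto | simp
  rw [this]
  ring

theorem dox_eq {U X V W Z Y : Type}
    [DecidableEq U] [DecidableEq X] [DecidableEq V] [DecidableEq W] [DecidableEq Z]
    [DecidableEq Y]
    [Inhabited U] [Inhabited X] [Inhabited V] [Inhabited W] [Inhabited Z] [Inhabited Y]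
    (T t : ℕ) (ht2 : 2 ≤ t) (htT : t ≤ T) (xstar : X)
    (q1 : U → ℝ) (qu : U → U → ℝ) (qx : X → U → ℝ) (qv : V → U → ℝ) (qw : W → U → ℝ)
    (a1 : Z → X → W → ℝ) (b1 : Y → Z → X → V → ℝ)
    (a : ℕ → Z → X → W → Z → Y → ℝ) (b : ℕ → Y → Z → X → V → Y → ℝ)
    (u : Fin (T + 1) → U) (v : Fin (T + 1) → V) (w : Fin (T + 1) → W)
    (x : Fin (T + 1) → X) (s : Fin (T + 1) → Z × Y) :
    doxG1 T {t} (fun _ => xstar) q1 qu qx qv qw a1 b1 a b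
        ⟨u, x, v, w, fun i => (s i).1, fun i => (s i).2⟩ =
      ((if x (idx T t) = xstar then 1 else 0) * exoG1 T t q1 qu qx qv qw u v w x) *
        chainW (kerG1 T a1 b1 a b x v w) 0 default s := by
  rw [chainW_ker T (by omega)]
  unfold doxG1 exoG1
  rw [Finset.prod_mul_distrib, Finset.prod_mul_distrib,
    ← Finset.mul_prod_erase (Finset.Icc 1 T) _ (Finset.mem_Icc.2 ⟨by omega, htT⟩ : t ∈ _)]
  have : ∀ A B C D E F : Prop, ∀ [Decidable A] [Decidable B] [Decidable C] [Decidable D]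
      [Decidable E] [Decidable F], (if A ∧ B ∧ C ∧ D ∧ E ∧ F then (1:ℝ) else 0) =
      (if A ∧ B ∧ C ∧ D then 1 else 0) * (if E ∧ F then 1 else 0) := by
    intros; split_ifs <;> first | tauto | simp
  rw [this]
  have h2 : ∏ j ∈ (Finset.Icc 1 T).erase t, (if j ∈ ({t} : Finset ℕ) then
      (if x (idx T j) = xstar then (1:ℝ) else 0) else qx (x (idx T j)) (u (idx T j))) =
      ∏ j ∈ (Finset.Icc 1 T).erase t, qx (x (idx T j)) (u (idx T j)) := by
    refine Finset.prod_congr rfl fun j hj => ?_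
    rw [if_neg (by simpa using Finset.ne_of_mem_erase hj)]
  rw [h2, if_pos (Finset.mem_singleton_self t)]
  ring

theorem exo_update {U X V W : Type} [DecidableEq U] [DecidableEq X] [DecidableEq V]
    [DecidableEq W] [Inhabited U] [Inhabited X] [Inhabited V] [Inhabited W]
    (T t : ℕ) (ht2 : 2 ≤ t) (htT : t ≤ T)
    (q1 : U → ℝ) (qu : U → U → ℝ) (qx : X → U → ℝ) (qv : V → U → ℝ) (qw : W → U → ℝ)
    (u : Fin (T + 1) → U) (v : Fin (T + 1) → V) (w : Fin (T + 1) → W)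
    (x : Fin (T + 1) → X) (x' : X) :
    exoG1 T t q1 qu qx qv qw u v w (Function.update x (idx T t) x') =
      exoG1 T t q1 qu qx qv qw u v w x := by
  unfold exoG1
  rw [Function.update_of_ne (idx_ne T 0 t (by omega) htT (by omega))]
  congr 3
  refine Finset.prod_congr rfl fun j hj => ?_
  obtain ⟨h1, h2⟩ := Finset.mem_erase.1 hj
  rw [Function.update_of_ne (idx_ne T j t (Finset.mem_Icc.1 h2).2 htT h1)]

theorem ker_update {X V W Z Y : Type} [DecidableEq Z] [DecidableEq Y]
    [Inhabited Z] [Inhabited Y] (T t : ℕ) (ht2 : 2 ≤ t) (htT : t ≤ T)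
    (a1 : Z → X → W → ℝ) (b1 : Y → Z → X → V → ℝ)
    (a : ℕ → Z → X → W → Z → Y → ℝ) (b : ℕ → Y → Z → X → V → Y → ℝ)
    (x : Fin (T + 1) → X) (v : Fin (T + 1) → V) (w : Fin (T + 1) → W) (x' : X)
    (p : Fin t → Z × Y) :
    chainW (kerG1 T a1 b1 a b (Function.update x (idx T t) x') v w) 0 default p =
      chainW (kerG1 T a1 b1 a b x v w) 0 default p := by
  unfold chainW kerG1
  refine Finset.prod_congr rfl fun j _ => ?_
  have := j.isLt
  rw [Function.update_of_ne (idx_ne T 1 t (by omega) htT (by omega)),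
    Function.update_of_ne (idx_ne T (0 + j.val) t (by omega) htT (by omega))]

/-- Weight of the history (z_{t-1}, y_{<t}) under given kernels. -/
noncomputable def preW {Z Y : Type} [Fintype Z] [Fintype Y] [DecidableEq Z] [DecidableEq Y]
    [Inhabited Z] [Inhabited Y] (κ : ℕ → Z × Y → Z × Y → ℝ) (t : ℕ) (ht : 0 < t)
    (zt1 : Z) (hy : Fin t → Y) : ℝ :=
  ∑ p : Fin t → Z × Y, chainW κ 0 default p *
    (if (p ⟨t - 1, by omega⟩).1 = zt1 ∧ ∀ j, (p j).2 = hy j then 1 else 0)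

open Classical in
theorem pr_general {U X V W Z Y : Type}
    [Fintype U] [Fintype X] [Fintype V] [Fintype W] [Fintype Z] [Fintype Y]
    [DecidableEq U] [DecidableEq X] [DecidableEq V] [DecidableEq W] [DecidableEq Z]
    [DecidableEq Y] [Inhabited Z] [Inhabited Y]
    (T t k : ℕ) (ht : 0 < t) (htkT : t + k ≤ T)
    (P : Traj U X V W Z Y T → ℝ)
    (Q : (Fin (T + 1) → U) → (Fin (T + 1) → V) → (Fin (T + 1) → W) → (Fin (T + 1) → X) → ℝ)
    (κ : (Fin (T + 1) → X) → (Fin (T + 1) → V) → (Fin (T + 1) → W) → ℕ → Z × Y → Z × Y → ℝ)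
    (hκ : ∀ x v w j, j ≤ T → ∀ s, ∑ s', κ x v w j s' s = 1)
    (hP : ∀ u v w x s, P ⟨u, x, v, w, fun i => (s i).1, fun i => (s i).2⟩ =
      Q u v w x * chainW (κ x v w) 0 default s)
    (zt1 : Z) (hy : Fin t → Y)
    (Ex : (Fin (T + 1) → X) → (Fin (T + 1) → V) → (Fin (T + 1) → W) → Prop) (yE : Y → Prop) :
    pr P (fun τ => yE (τ.y (idx T (t + k))) ∧ Ex τ.x τ.v τ.w ∧
        τ.z (idx T (t - 1)) = zt1 ∧ ∀ j : Fin t, τ.y (idx T j.val) = hy j) =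
      ∑ u, ∑ v, ∑ w, ∑ x, Q u v w x * (if Ex x v w then 1 else 0) *
        preW (κ x v w) t ht zt1 hy *
        ∑ g : Fin (k + 1) → Z × Y, chainW (κ x v w) t (zt1, hy ⟨t - 1, by omega⟩) g *
          (if yE (g (Fin.last k)).2 then 1 else 0) := by
  unfold pr
  rw [sum_traj]
  refine Finset.sum_congr rfl fun u _ => Finset.sum_congr rfl fun v _ =>
    Finset.sum_congr rfl fun w _ => Finset.sum_congr rfl fun x _ => ?_
  have hm := markov_sum (κ x v w) T t k default ht htkT (hκ x v w)
    (fun p => if (p ⟨t - 1, by omega⟩).1 = zt1 ∧ ∀ j, (p j).2 = hy j then 1 else 0)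
    (fun s => if yE s.2 then 1 else 0)
  have hr : ∑ p : Fin t → Z × Y, chainW (κ x v w) 0 default p *
      (if (p ⟨t - 1, by omega⟩).1 = zt1 ∧ ∀ j, (p j).2 = hy j then 1 else 0) *
        ∑ g : Fin (k + 1) → Z × Y, chainW (κ x v w) t (p ⟨t - 1, by omega⟩) g *
          (if yE (g (Fin.last k)).2 then 1 else 0) =
      preW (κ x v w) t ht zt1 hy *
        ∑ g : Fin (k + 1) → Z × Y, chainW (κ x v w) t (zt1, hy ⟨t - 1, by omega⟩) g *
          (if yE (g (Fin.last k)).2 then 1 else 0) := by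
    unfold preW
    rw [Finset.sum_mul]
    refine Finset.sum_congr rfl fun p _ => ?_
    by_cases h : (p ⟨t - 1, by omega⟩).1 = zt1 ∧ ∀ j, (p j).2 = hy j
    · have : p ⟨t - 1, by omega⟩ = (zt1, hy ⟨t - 1, by omega⟩) := Prod.ext h.1 (h.2 _)
      rw [this]
    · simp only [if_neg h, mul_zero, zero_mul]
  rw [mul_assoc, ← hr, ← hm, Finset.mul_sum]
  refine Finset.sum_congr rfl fun s _ => ?_
  rw [hP]
  by_cases h1 : Ex x v w <;> by_cases h2 : yE (s (idx T (t + k))).2 <;>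
    by_cases h3 : (s (idx T (t - 1))).1 = zt1 <;>
    by_cases h4 : ∀ j : Fin t, (s (idx T j.val)).2 = hy j <;> simp [h1, h2, h3, h4]

theorem ker_block {X V W Z Y : Type} [Fintype Z] [Fintype Y] [DecidableEq Z] [DecidableEq Y]
    [Inhabited Z] [Inhabited Y] (T t k : ℕ) (ht2 : 2 ≤ t)
    (a1 : Z → X → W → ℝ) (b1 : Y → Z → X → V → ℝ)
    (a : ℕ → Z → X → W → Z → Y → ℝ) (b : ℕ → Y → Z → X → V → Y → ℝ)
    (x : Fin (T + 1) → X) (v : Fin (T + 1) → V) (w : Fin (T + 1) → W)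
    (xstar : X) (hxf : Fin k → X) (hwk : Fin (k + 1) → W) (hvk : Fin (k + 1) → V)
    (hx0 : x (idx T t) = xstar)
    (hx : ∀ i : Fin k, x (idx T (t + 1 + i.val)) = hxf i)
    (hw : ∀ i : Fin (k + 1), w (idx T (t + i.val)) = hwk i)
    (hv : ∀ i : Fin (k + 1), v (idx T (t + i.val)) = hvk i)
    (zt1 : Z) (yl yv : Y) (dec : ∀ y : Y, Decidable (y = yv)) :
    ∑ g : Fin (k + 1) → Z × Y, chainW (kerG1 T a1 b1 a b x v w) t (zt1, yl) g *
          (@ite ℝ ((g (Fin.last k)).2 = yv) (dec _) 1 0) =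
      ∑ gy : Fin k → Y, ∑ gz : Fin (k + 1) → Z,
            ∏ i : Fin (k + 1),
              (b (t + i.val) (extWith k gy yv i) (gz i) (shiftFirst k xstar hxf i)
                  (hvk i) (shiftFirst k yl gy i) *
                a (t + i.val) (gz i) (shiftFirst k xstar hxf i) (hwk i)
                  (shiftFirst k zt1 (fun l : Fin k => gz l.castSucc) i)
                  (shiftFirst k yl gy i)) := by
  rw [← (Equiv.arrowProdEquivProdArrow (Fin (k + 1)) (fun _ => Z) (fun _ => Y)).symm.sum_comp,
    Fintype.sum_prod_type, Finset.sum_comm, sum_extWith]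
  refine Finset.sum_congr rfl fun gy _ => ?_
  rw [Finset.sum_comm]
  refine Finset.sum_congr rfl fun gz _ => ?_
  rw [Finset.sum_eq_single yv]
  · have h1 : extWith k gy yv (Fin.last k) = yv := by simp [extWith]
    simp only [Equiv.arrowProdEquivProdArrow, Equiv.coe_fn_symm_mk, h1, if_true, mul_one]
    unfold chainW
    refine Finset.prod_congr rfl fun i _ => ?_
    have hi := i.isLt
    have hX : x (idx T (t + i.val)) = shiftFirst k xstar hxf i := by
      unfold shiftFirst
      split_ifs with h
      · rw [h, add_zero, hx0]
      · rw [← hx]; congr 2; simp; omega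
    have hprev : prevOf (zt1, yl) (fun i => (gz i, extWith k gy yv i)) i =
        (shiftFirst k zt1 (fun l : Fin k => gz l.castSucc) i, shiftFirst k yl gy i) := by
      unfold prevOf shiftFirst
      split_ifs with h
      · rfl
      · ext
        · rfl
        · simp only [extWith]
          rw [dif_pos (by omega)]
    unfold kerG1
    rw [if_neg (by omega), if_neg (by omega), hprev, hX, hw, hv]
    ring
  · intro l _ hl
    have h1 : extWith k gy l (Fin.last k) = l := by simp [extWith]
    simp [Equiv.arrowProdEquivProdArrow, h1, hl]
  · simp

end Model

theorem pr_congr' {α : Type*} [Fintype α] (p : α → ℝ) (E E' : α → Prop)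
    (h : ∀ τ, E τ ↔ E' τ) : pr p E = pr p E' := by
  have : E = E' := funext fun τ => propext (h τ)
  rw [this]

theorem joint_nonneg {U X V W Z Y : Type}
    [DecidableEq U] [DecidableEq X] [DecidableEq V] [DecidableEq W] [DecidableEq Z]
    [DecidableEq Y]
    [Inhabited U] [Inhabited X] [Inhabited V] [Inhabited W] [Inhabited Z] [Inhabited Y]
    (T : ℕ)
    (q1 : U → ℝ) (qu : U → U → ℝ) (qx : X → U → ℝ) (qv : V → U → ℝ) (qw : W → U → ℝ)
    (a1 : Z → X → W → ℝ) (b1 : Y → Z → X → V → ℝ)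
    (a : ℕ → Z → X → W → Z → Y → ℝ) (b : ℕ → Y → Z → X → V → Y → ℝ)
    (hq1 : ∀ u', 0 ≤ q1 u') (hqu : ∀ u0 u', 0 ≤ qu u' u0) (hqx : ∀ u0 x', 0 ≤ qx x' u0)
    (hqv : ∀ u0 v', 0 ≤ qv v' u0) (hqw : ∀ u0 w', 0 ≤ qw w' u0)
    (ha1 : ∀ x0 w0 z', 0 ≤ a1 z' x0 w0) (hb1 : ∀ z0 x0 v0 y', 0 ≤ b1 y' z0 x0 v0)
    (ha : ∀ j, 2 ≤ j → j ≤ T → ∀ x0 w0 z0 y0 z', 0 ≤ a j z' x0 w0 z0 y0)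
    (hb : ∀ j, 2 ≤ j → j ≤ T → ∀ z0 x0 v0 y0 y', 0 ≤ b j y' z0 x0 v0 y0)
    (τ : Traj U X V W Z Y T) : 0 ≤ jointG1 T q1 qu qx qv qw a1 b1 a b τ := by
  unfold jointG1
  refine mul_nonneg (mul_nonneg (mul_nonneg ?_ (mul_nonneg (hq1 _) ?_)) ?_)
    (mul_nonneg (mul_nonneg (ha1 _ _ _) (hb1 _ _ _ _)) ?_)
  · split_ifs <;> norm_num
  · exact Finset.prod_nonneg fun j _ => hqu _ _
  · exact Finset.prod_nonneg fun j _ => mul_nonneg (mul_nonneg (hqx _ _) (hqv _ _)) (hqw _ _)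
  · refine Finset.prod_nonneg fun j hj => ?_
    have := Finset.mem_Icc.1 hj
    exact mul_nonneg (ha j this.1 this.2 _ _ _ _ _) (hb j this.1 this.2 _ _ _ _ _)

/-- Long-term causal effect of the atomic intervention do(x_t = x*),
graph G1: with C1 = (x_{t+1:t+k}, w_{t:t+k}, v_{t:t+k}, z_{t-1}, S_{t-1}) and assuming
P(x_t = x*, c) > 0 whenever P(c) > 0, for every value y:
P(y_{t+k} = y | do(x_t = x*)) = Σ_c P(y_{t+k} = y | x_t = x*, c) P(c)
  = Σ_c [Σ_{y_{t:t+k-1}, z_{t:t+k}} ∏_{j=t}^{t+k} b(y_j) a(z_j)] P(c),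
with y_{t+k} = y held fixed, x_t = x*, and x_{t+1:t+k} taking the values given in c. -/
theorem statement_3 {U X V W Z Y : Type}
    [Fintype U] [Fintype X] [Fintype V] [Fintype W] [Fintype Z] [Fintype Y]
    [DecidableEq U] [DecidableEq X] [DecidableEq V] [DecidableEq W] [DecidableEq Z]
    [DecidableEq Y]
    [Inhabited U] [Inhabited X] [Inhabited V] [Inhabited W] [Inhabited Z] [Inhabited Y]
    (T t k : ℕ) (ht2 : 2 ≤ t) (htkT : t + k ≤ T) (xstar : X)
    (q1 : U → ℝ) (qu : U → U → ℝ) (qx : X → U → ℝ) (qv : V → U → ℝ) (qw : W → U → ℝ)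
    (a1 : Z → X → W → ℝ) (b1 : Y → Z → X → V → ℝ)
    (a : ℕ → Z → X → W → Z → Y → ℝ) (b : ℕ → Y → Z → X → V → Y → ℝ)
    (hq1 : (∀ u', 0 ≤ q1 u') ∧ (∑ u', q1 u') = 1)
    (hqu : ∀ u0, (∀ u', 0 ≤ qu u' u0) ∧ (∑ u', qu u' u0) = 1)
    (hqx : ∀ u0, (∀ x', 0 ≤ qx x' u0) ∧ (∑ x', qx x' u0) = 1)
    (hqv : ∀ u0, (∀ v', 0 ≤ qv v' u0) ∧ (∑ v', qv v' u0) = 1)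
    (hqw : ∀ u0, (∀ w', 0 ≤ qw w' u0) ∧ (∑ w', qw w' u0) = 1)
    (ha1 : ∀ x0 w0, (∀ z', 0 ≤ a1 z' x0 w0) ∧ (∑ z', a1 z' x0 w0) = 1)
    (hb1 : ∀ z0 x0 v0, (∀ y', 0 ≤ b1 y' z0 x0 v0) ∧ (∑ y', b1 y' z0 x0 v0) = 1)
    (ha : ∀ j, 2 ≤ j → j ≤ T → ∀ x0 w0 z0 y0,
      (∀ z', 0 ≤ a j z' x0 w0 z0 y0) ∧ (∑ z', a j z' x0 w0 z0 y0) = 1)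
    (hb : ∀ j, 2 ≤ j → j ≤ T → ∀ z0 x0 v0 y0,
      (∀ y', 0 ≤ b j y' z0 x0 v0 y0) ∧ (∑ y', b j y' z0 x0 v0 y0) = 1)
    (hpos : ∀ (hxf : Fin k → X) (hwk : Fin (k + 1) → W) (hvk : Fin (k + 1) → V) (zt1 : Z)
        (hy : Fin t → Y) (hx : Fin t → X) (hv : Fin t → V) (hw : Fin t → W),
      0 < pr (jointG1 T q1 qu qx qv qw a1 b1 a b)
          (fun τ => (∀ i : Fin k, τ.x (idx T (t + 1 + i.val)) = hxf i) ∧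
            (∀ i : Fin (k + 1), τ.w (idx T (t + i.val)) = hwk i) ∧
            (∀ i : Fin (k + 1), τ.v (idx T (t + i.val)) = hvk i) ∧
            τ.z (idx T (t - 1)) = zt1 ∧ histEv T t τ hy hx hv hw) →
      0 < pr (jointG1 T q1 qu qx qv qw a1 b1 a b)
          (fun τ => τ.x (idx T t) = xstar ∧
            (∀ i : Fin k, τ.x (idx T (t + 1 + i.val)) = hxf i) ∧
            (∀ i : Fin (k + 1), τ.w (idx T (t + i.val)) = hwk i) ∧
            (∀ i : Fin (k + 1), τ.v (idx T (t + i.val)) = hvk i) ∧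
            τ.z (idx T (t - 1)) = zt1 ∧ histEv T t τ hy hx hv hw)) :
    ∀ yv : Y,
      (pr (doxG1 T {t} (fun _ => xstar) q1 qu qx qv qw a1 b1 a b)
          (fun τ => τ.y (idx T (t + k)) = yv) =
        ∑ hxf : Fin k → X, ∑ hwk : Fin (k + 1) → W, ∑ hvk : Fin (k + 1) → V, ∑ zt1 : Z,
          ∑ hy : Fin t → Y, ∑ hx : Fin t → X, ∑ hv : Fin t → V, ∑ hw : Fin t → W,
          cpr (jointG1 T q1 qu qx qv qw a1 b1 a b)
            (fun τ => τ.y (idx T (t + k)) = yv)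
            (fun τ => τ.x (idx T t) = xstar ∧
              (∀ i : Fin k, τ.x (idx T (t + 1 + i.val)) = hxf i) ∧
              (∀ i : Fin (k + 1), τ.w (idx T (t + i.val)) = hwk i) ∧
              (∀ i : Fin (k + 1), τ.v (idx T (t + i.val)) = hvk i) ∧
              τ.z (idx T (t - 1)) = zt1 ∧ histEv T t τ hy hx hv hw) *
          pr (jointG1 T q1 qu qx qv qw a1 b1 a b)
            (fun τ => (∀ i : Fin k, τ.x (idx T (t + 1 + i.val)) = hxf i) ∧
              (∀ i : Fin (k + 1), τ.w (idx T (t + i.val)) = hwk i) ∧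
              (∀ i : Fin (k + 1), τ.v (idx T (t + i.val)) = hvk i) ∧
              τ.z (idx T (t - 1)) = zt1 ∧ histEv T t τ hy hx hv hw)) ∧
      (pr (doxG1 T {t} (fun _ => xstar) q1 qu qx qv qw a1 b1 a b)
          (fun τ => τ.y (idx T (t + k)) = yv) =
        ∑ hxf : Fin k → X, ∑ hwk : Fin (k + 1) → W, ∑ hvk : Fin (k + 1) → V, ∑ zt1 : Z,
          ∑ hy : Fin t → Y, ∑ hx : Fin t → X, ∑ hv : Fin t → V, ∑ hw : Fin t → W,
          (∑ gy : Fin k → Y, ∑ gz : Fin (k + 1) → Z,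
            ∏ i : Fin (k + 1),
              (b (t + i.val) (extWith k gy yv i) (gz i) (shiftFirst k xstar hxf i)
                  (hvk i) (shiftFirst k (hy ⟨t - 1, by omega⟩) gy i) *
                a (t + i.val) (gz i) (shiftFirst k xstar hxf i) (hwk i)
                  (shiftFirst k zt1 (fun l : Fin k => gz l.castSucc) i)
                  (shiftFirst k (hy ⟨t - 1, by omega⟩) gy i))) *
          pr (jointG1 T q1 qu qx qv qw a1 b1 a b)
            (fun τ => (∀ i : Fin k, τ.x (idx T (t + 1 + i.val)) = hxf i) ∧
              (∀ i : Fin (k + 1), τ.w (idx T (t + i.val)) = hwk i) ∧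
              (∀ i : Fin (k + 1), τ.v (idx T (t + i.val)) = hvk i) ∧
              τ.z (idx T (t - 1)) = zt1 ∧ histEv T t τ hy hx hv hw)) := by
  classical
  intro yv
  have htT : t ≤ T := by omega
  have ht0 : 0 < t := by omega
  have hκ := kerG1_sum T a1 b1 a b (fun x0 w0 => (ha1 x0 w0).2)
    (fun z0 x0 v0 => (hb1 z0 x0 v0).2) (fun j h1 h2 x0 w0 z0 y0 => (ha j h1 h2 x0 w0 z0 y0).2)
    (fun j h1 h2 z0 x0 v0 y0 => (hb j h1 h2 z0 x0 v0 y0).2)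
  have hJ := joint_eq T t ht2 htT q1 qu qx qv qw a1 b1 a b
  have hD := dox_eq T t ht2 htT xstar q1 qu qx qv qw a1 b1 a b
  have hone : ∀ (x : Fin (T + 1) → X) (v : Fin (T + 1) → V) (w : Fin (T + 1) → W)
      (s0 : Z × Y), ∑ g : Fin (k + 1) → Z × Y, chainW (kerG1 T a1 b1 a b x v w) t s0 g = 1 :=
    fun x v w s0 => sum_chainW _ _ _ _ (fun i hi s => hκ x v w _ (by omega) s)
  -- the interventional identity for a fixed configuration
  have key1 : ∀ (hxf : Fin k → X) (hwk : Fin (k + 1) → W) (hvk : Fin (k + 1) → V) (zt1 : Z)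
      (hy : Fin t → Y) (hx : Fin t → X) (hv : Fin t → V) (hw : Fin t → W),
      pr (doxG1 T {t} (fun _ => xstar) q1 qu qx qv qw a1 b1 a b)
        (fun τ => τ.y (idx T (t + k)) = yv ∧
          ((∀ i : Fin k, τ.x (idx T (t + 1 + i.val)) = hxf i) ∧
            (∀ i : Fin (k + 1), τ.w (idx T (t + i.val)) = hwk i) ∧
            (∀ i : Fin (k + 1), τ.v (idx T (t + i.val)) = hvk i) ∧
            τ.z (idx T (t - 1)) = zt1 ∧ histEv T t τ hy hx hv hw)) =
      (∑ gy : Fin k → Y, ∑ gz : Fin (k + 1) → Z,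
            ∏ i : Fin (k + 1),
              (b (t + i.val) (extWith k gy yv i) (gz i) (shiftFirst k xstar hxf i)
                  (hvk i) (shiftFirst k (hy ⟨t - 1, by omega⟩) gy i) *
                a (t + i.val) (gz i) (shiftFirst k xstar hxf i) (hwk i)
                  (shiftFirst k zt1 (fun l : Fin k => gz l.castSucc) i)
                  (shiftFirst k (hy ⟨t - 1, by omega⟩) gy i))) *
      pr (jointG1 T q1 qu qx qv qw a1 b1 a b)
        (fun τ => (∀ i : Fin k, τ.x (idx T (t + 1 + i.val)) = hxf i) ∧
          (∀ i : Fin (k + 1), τ.w (idx T (t + i.val)) = hwk i) ∧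
          (∀ i : Fin (k + 1), τ.v (idx T (t + i.val)) = hvk i) ∧
          τ.z (idx T (t - 1)) = zt1 ∧ histEv T t τ hy hx hv hw) := by
    intro hxf hwk hvk zt1 hy hx hv hw
    obtain ⟨Ex, hEx⟩ : ∃ Ex : (Fin (T + 1) → X) → (Fin (T + 1) → V) →
        (Fin (T + 1) → W) → Prop, ∀ x v w, Ex x v w ↔ ((∀ i : Fin k, x (idx T (t + 1 + i.val)) = hxf i) ∧
        (∀ i : Fin (k + 1), w (idx T (t + i.val)) = hwk i) ∧
        (∀ i : Fin (k + 1), v (idx T (t + i.val)) = hvk i) ∧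
        (∀ j : Fin t, x (idx T j.val) = hx j) ∧
        (∀ j : Fin t, v (idx T j.val) = hv j) ∧ (∀ j : Fin t, w (idx T j.val) = hw j)) :=
      ⟨_, fun _ _ _ => Iff.rfl⟩
    have e1 := pr_general T t k ht0 htkT _ _ _ hκ hD zt1 hy Ex (fun y' => y' = yv)
    have e2 := pr_general T t k ht0 htkT _ _ _ hκ hJ zt1 hy Ex (fun _ => True)
    rw [pr_congr' _ _ _ (fun τ => by
      simp only [histEv]; show _ ↔ (τ.y (idx T (t + k)) = yv ∧ Ex τ.x τ.v τ.w ∧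
        τ.z (idx T (t - 1)) = zt1 ∧ ∀ j : Fin t, τ.y (idx T j.val) = hy j)
      simp only [hEx]; tauto), e1,
      pr_congr' (jointG1 T q1 qu qx qv qw a1 b1 a b) _ _ (fun τ => by
      simp only [histEv]; show _ ↔ (True ∧ Ex τ.x τ.v τ.w ∧
        τ.z (idx T (t - 1)) = zt1 ∧ ∀ j : Fin t, τ.y (idx T j.val) = hy j)
      simp only [hEx]; tauto), e2]
    simp only [if_true, mul_one, hone, Finset.mul_sum (Finset.univ : Finset (Fin (T + 1) → U))]
    refine Finset.sum_congr rfl fun u _ => ?_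
    rw [Finset.mul_sum]
    refine Finset.sum_congr rfl fun v _ => ?_
    rw [Finset.mul_sum]
    refine Finset.sum_congr rfl fun w _ => ?_
    have hs := sum_one_coord (idx T t) xstar (fun x' => qx x' (u (idx T t)))
      (fun x => exoG1 T t q1 qu qx qv qw u v w x * (if Ex x v w then 1 else 0) *
        preW (kerG1 T a1 b1 a b x v w) t ht0 zt1 hy) (fun x x' => by
        have hExu : Ex (Function.update x (idx T t) x') v w ↔ Ex x v w := by
          simp only [hEx]
          have g1 : ∀ i : Fin k, Function.update x (idx T t) x' (idx T (t + 1 + i.val)) =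
              x (idx T (t + 1 + i.val)) := fun i =>
            Function.update_of_ne (idx_ne T _ t (by omega) htT (by omega)) _ _
          have g2 : ∀ i : Fin t, Function.update x (idx T t) x' (idx T i.val) =
              x (idx T i.val) := fun i =>
            Function.update_of_ne (idx_ne T _ t (by omega) htT (by omega)) _ _
          simp only [g1, g2]
        simp only [hExu, preW, ker_update T t ht2 htT, exo_update T t ht2 htT])
    rw [(hqx _).2, one_mul] at hs
    simp only [mul_assoc] at hs ⊢
    rw [hs, Finset.mul_sum]
    refine Finset.sum_congr rfl fun x _ => ?_
    by_cases h1 : x (idx T t) = xstar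
    · by_cases h2 : Ex x v w
      · have h3 := (hEx _ _ _).1 h2
        rw [ker_block T t k ht2 a1 b1 a b x v w xstar hxf hwk hvk h1 h3.1 h3.2.1 h3.2.2.1 zt1 _ yv
        (fun _ => Classical.propDecidable _)]
        ring
      · simp [h2]
    · simp [h1]
  -- the observational identity for a fixed configuration
  have key2 : ∀ (hxf : Fin k → X) (hwk : Fin (k + 1) → W) (hvk : Fin (k + 1) → V) (zt1 : Z)
      (hy : Fin t → Y) (hx : Fin t → X) (hv : Fin t → V) (hw : Fin t → W),
      pr (jointG1 T q1 qu qx qv qw a1 b1 a b)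
        (fun τ => τ.y (idx T (t + k)) = yv ∧ (τ.x (idx T t) = xstar ∧
          (∀ i : Fin k, τ.x (idx T (t + 1 + i.val)) = hxf i) ∧
            (∀ i : Fin (k + 1), τ.w (idx T (t + i.val)) = hwk i) ∧
            (∀ i : Fin (k + 1), τ.v (idx T (t + i.val)) = hvk i) ∧
            τ.z (idx T (t - 1)) = zt1 ∧ histEv T t τ hy hx hv hw)) =
      (∑ gy : Fin k → Y, ∑ gz : Fin (k + 1) → Z,
            ∏ i : Fin (k + 1),
              (b (t + i.val) (extWith k gy yv i) (gz i) (shiftFirst k xstar hxf i)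
                  (hvk i) (shiftFirst k (hy ⟨t - 1, by omega⟩) gy i) *
                a (t + i.val) (gz i) (shiftFirst k xstar hxf i) (hwk i)
                  (shiftFirst k zt1 (fun l : Fin k => gz l.castSucc) i)
                  (shiftFirst k (hy ⟨t - 1, by omega⟩) gy i))) *
      pr (jointG1 T q1 qu qx qv qw a1 b1 a b)
        (fun τ => τ.x (idx T t) = xstar ∧
          (∀ i : Fin k, τ.x (idx T (t + 1 + i.val)) = hxf i) ∧
          (∀ i : Fin (k + 1), τ.w (idx T (t + i.val)) = hwk i) ∧
          (∀ i : Fin (k + 1), τ.v (idx T (t + i.val)) = hvk i) ∧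
          τ.z (idx T (t - 1)) = zt1 ∧ histEv T t τ hy hx hv hw) := by
    intro hxf hwk hvk zt1 hy hx hv hw
    obtain ⟨Ex, hEx⟩ : ∃ Ex : (Fin (T + 1) → X) → (Fin (T + 1) → V) →
        (Fin (T + 1) → W) → Prop, ∀ x v w, Ex x v w ↔ (x (idx T t) = xstar ∧ (∀ i : Fin k, x (idx T (t + 1 + i.val)) = hxf i) ∧
        (∀ i : Fin (k + 1), w (idx T (t + i.val)) = hwk i) ∧
        (∀ i : Fin (k + 1), v (idx T (t + i.val)) = hvk i) ∧
        (∀ j : Fin t, x (idx T j.val) = hx j) ∧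
        (∀ j : Fin t, v (idx T j.val) = hv j) ∧ (∀ j : Fin t, w (idx T j.val) = hw j)) :=
      ⟨_, fun _ _ _ => Iff.rfl⟩
    have e1 := pr_general T t k ht0 htkT _ _ _ hκ hJ zt1 hy Ex (fun y' => y' = yv)
    have e2 := pr_general T t k ht0 htkT _ _ _ hκ hJ zt1 hy Ex (fun _ => True)
    rw [pr_congr' _ _ _ (fun τ => by
      simp only [histEv]; show _ ↔ (τ.y (idx T (t + k)) = yv ∧ Ex τ.x τ.v τ.w ∧
        τ.z (idx T (t - 1)) = zt1 ∧ ∀ j : Fin t, τ.y (idx T j.val) = hy j)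
      simp only [hEx]; tauto), e1,
      pr_congr' (jointG1 T q1 qu qx qv qw a1 b1 a b) _ _ (fun τ => by
      simp only [histEv]; show _ ↔ (True ∧ Ex τ.x τ.v τ.w ∧
        τ.z (idx T (t - 1)) = zt1 ∧ ∀ j : Fin t, τ.y (idx T j.val) = hy j)
      simp only [hEx]; tauto), e2]
    simp only [if_true, mul_one, hone, Finset.mul_sum (Finset.univ : Finset (Fin (T + 1) → U))]
    refine Finset.sum_congr rfl fun u _ => ?_
    rw [Finset.mul_sum]
    refine Finset.sum_congr rfl fun v _ => ?_
    rw [Finset.mul_sum]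
    refine Finset.sum_congr rfl fun w _ => ?_
    rw [Finset.mul_sum]
    refine Finset.sum_congr rfl fun x _ => ?_
    by_cases h2 : Ex x v w
    · have h3 := (hEx _ _ _).1 h2
      rw [ker_block T t k ht2 a1 b1 a b x v w xstar hxf hwk hvk h3.1 h3.2.1 h3.2.2.1 h3.2.2.2.1
        zt1 _ yv
        (fun _ => Classical.propDecidable _)]
      ring
    · simp [h2]
  have main : pr (doxG1 T {t} (fun _ => xstar) q1 qu qx qv qw a1 b1 a b)
          (fun τ => τ.y (idx T (t + k)) = yv) =
        ∑ hxf : Fin k → X, ∑ hwk : Fin (k + 1) → W, ∑ hvk : Fin (k + 1) → V, ∑ zt1 : Z,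
          ∑ hy : Fin t → Y, ∑ hx : Fin t → X, ∑ hv : Fin t → V, ∑ hw : Fin t → W,
          pr (doxG1 T {t} (fun _ => xstar) q1 qu qx qv qw a1 b1 a b)
        (fun τ => τ.y (idx T (t + k)) = yv ∧
          ((∀ i : Fin k, τ.x (idx T (t + 1 + i.val)) = hxf i) ∧
            (∀ i : Fin (k + 1), τ.w (idx T (t + i.val)) = hwk i) ∧
            (∀ i : Fin (k + 1), τ.v (idx T (t + i.val)) = hvk i) ∧
            τ.z (idx T (t - 1)) = zt1 ∧ histEv T t τ hy hx hv hw)) := by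
    rw [pr_partition _ _ (fun τ : Traj U X V W Z Y T =>
      ((fun i : Fin k => τ.x (idx T (t + 1 + i.val))),
       (fun i : Fin (k + 1) => τ.w (idx T (t + i.val))),
       (fun i : Fin (k + 1) => τ.v (idx T (t + i.val))), τ.z (idx T (t - 1)),
       (fun j : Fin t => τ.y (idx T j.val)), (fun j : Fin t => τ.x (idx T j.val)),
       (fun j : Fin t => τ.v (idx T j.val)), (fun j : Fin t => τ.w (idx T j.val))))]
    simp only [Fintype.sum_prod_type]
    refine Finset.sum_congr rfl fun hxf _ => Finset.sum_congr rfl fun hwk _ =>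
      Finset.sum_congr rfl fun hvk _ => Finset.sum_congr rfl fun zt1 _ =>
      Finset.sum_congr rfl fun hy _ => Finset.sum_congr rfl fun hx _ =>
      Finset.sum_congr rfl fun hv _ => Finset.sum_congr rfl fun hw _ => ?_
    refine pr_congr' _ _ _ fun τ => and_congr_right fun _ => ?_
    rw [Prod.mk.injEq, Prod.mk.injEq, Prod.mk.injEq, Prod.mk.injEq, Prod.mk.injEq,
      Prod.mk.injEq, Prod.mk.injEq]
    exact and_congr funext_iff (and_congr funext_iff (and_congr funext_iff
      (and_congr Iff.rfl (and_congr funext_iff (and_congr funext_iff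
        (and_congr funext_iff funext_iff))))))
  rw [main]
  constructor
  · refine Finset.sum_congr rfl fun hxf _ => Finset.sum_congr rfl fun hwk _ =>
      Finset.sum_congr rfl fun hvk _ => Finset.sum_congr rfl fun zt1 _ =>
      Finset.sum_congr rfl fun hy _ => Finset.sum_congr rfl fun hx _ =>
      Finset.sum_congr rfl fun hv _ => Finset.sum_congr rfl fun hw _ => ?_
    rw [key1, cpr, key2]
    have hp := hpos hxf hwk hvk zt1 hy hx hv hw
    rcases eq_or_lt_of_le (show 0 ≤ pr (jointG1 T q1 qu qx qv qw a1 b1 a b)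
        (fun τ => (∀ i : Fin k, τ.x (idx T (t + 1 + i.val)) = hxf i) ∧
          (∀ i : Fin (k + 1), τ.w (idx T (t + i.val)) = hwk i) ∧
          (∀ i : Fin (k + 1), τ.v (idx T (t + i.val)) = hvk i) ∧
          τ.z (idx T (t - 1)) = zt1 ∧ histEv T t τ hy hx hv hw) by
        unfold pr
        refine Finset.sum_nonneg fun τ _ => ?_
        split_ifs
        · exact joint_nonneg T q1 qu qx qv qw a1 b1 a b hq1.1 (fun u0 => (hqu u0).1)
            (fun u0 => (hqx u0).1) (fun u0 => (hqv u0).1) (fun u0 => (hqw u0).1)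
            (fun x0 w0 => (ha1 x0 w0).1) (fun z0 x0 v0 => (hb1 z0 x0 v0).1)
            (fun j h1 h2 x0 w0 z0 y0 => (ha j h1 h2 x0 w0 z0 y0).1)
            (fun j h1 h2 z0 x0 v0 y0 => (hb j h1 h2 z0 x0 v0 y0).1) τ
        · exact le_rfl) with h0 | h0
    · rw [← h0, mul_zero, mul_zero]
    · rw [mul_div_cancel_right₀ _ (hp h0).ne']
  · refine Finset.sum_congr rfl fun hxf _ => Finset.sum_congr rfl fun hwk _ =>
      Finset.sum_congr rfl fun hvk _ => Finset.sum_congr rfl fun zt1 _ =>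
      Finset.sum_congr rfl fun hy _ => Finset.sum_congr rfl fun hx _ =>
      Finset.sum_congr rfl fun hv _ => Finset.sum_congr rfl fun hw _ => ?_
    exact key1 hxf hwk hvk zt1 hy hx hv hw
end

section
/- For a FAN-HMM, fix t with 2 ≤ t ≤ T and k ≥ 1 with t + k ≤ T, suppose P(y_{1:t−1}) > 0, and condition only on the responses y_{1:t−1} (treating y_{t:t+k−1} as unobserved). Define E_j(s, m) = P(z_j = s, y_j = m | y_{1:t−1}) for t ≤ j ≤ t+k. Then E_t(s, m) = ( Σ_{r=1}^S ᾱ_{t−1}(r) A_t(r, s; y_{t−1}) ) B_t(s, m; y_{t−1}) with ᾱ_{t−1}(r) = P(z_{t−1} = r | y_{1:t−1}), and for t < j ≤ t+k the recursion E_j(s, m) = Σ_{r=1}^S Σ_{m'=1}^M E_{j−1}(r, m') A_j(r, s; m') B_j(s, m; m') holds; in particular the joint conditional distribution P(z_{t+k} = s, y_{t+k} = m | y_{1:t−1}) is computed by this recursion without enumerating the intermediate response and state trajectories. -/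
open Finset

/-- View a tuple indexed by `Fin T` (index i is time i+1) as a sequence on times 1..T. -/
def fext {β : Type*} [Inhabited β] (T : ℕ) (g : Fin T → β) (j : ℕ) : β :=
  if h : 1 ≤ j ∧ j ≤ T then g ⟨j - 1, by omega⟩ else default

/-- Joint pmf of a FAN-HMM over pairs (z_{1:T}, y_{1:T}):
π(z_1) B_1(z_1, y_1) ∏_{t=2}^T A_t(z_{t-1}, z_t; y_{t-1}) B_t(z_t, y_t; y_{t-1}),
where `A j r s m = P(z_j = s | z_{j-1} = r, y_{j-1} = m)` and
`B j s m m' = P(y_j = m | z_j = s, y_{j-1} = m')`. -/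
noncomputable def fanJoint {S M : ℕ} [NeZero S] [NeZero M] (pi0 : Fin S → ℝ)
    (A : ℕ → Fin S → Fin S → Fin M → ℝ) (B1 : Fin S → Fin M → ℝ)
    (B : ℕ → Fin S → Fin M → Fin M → ℝ) (T : ℕ)
    (p : (Fin T → Fin S) × (Fin T → Fin M)) : ℝ :=
  pi0 (fext T p.1 1) * B1 (fext T p.1 1) (fext T p.2 1) *
    ∏ j ∈ Finset.Icc 2 T,
      (A j (fext T p.1 (j - 1)) (fext T p.1 j) (fext T p.2 (j - 1)) *
        B j (fext T p.1 j) (fext T p.2 j) (fext T p.2 (j - 1)))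

/-- Expectation of a functional of the (extended) trajectories. -/
noncomputable def fanEX {S M : ℕ} [NeZero S] [NeZero M] (pi0 : Fin S → ℝ)
    (A : ℕ → Fin S → Fin S → Fin M → ℝ) (B1 : Fin S → Fin M → ℝ)
    (B : ℕ → Fin S → Fin M → Fin M → ℝ) (T : ℕ)
    (F : (ℕ → Fin S) → (ℕ → Fin M) → ℝ) : ℝ :=
  ∑ p, fanJoint pi0 A B1 B T p * F (fext T p.1) (fext T p.2)

theorem fext_snoc {β : Type*} [Inhabited β] (n : ℕ) (g : Fin n → β) (s : β) :
    fext (n + 1) (Fin.snoc (α := fun _ => β) g s) = Function.update (fext n g) (n + 1) s := by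
  funext j
  by_cases hj : j = n + 1
  · subst hj
    simp [fext, Fin.snoc]
  · rw [Function.update_of_ne hj]
    unfold fext
    by_cases h : 1 ≤ j ∧ j ≤ n
    · have h2 : 1 ≤ j ∧ j ≤ n + 1 := by omega
      have h3 : j - 1 < n := by omega
      rw [dif_pos h, dif_pos h2]
      simp [Fin.snoc, h3]
    · have h2 : ¬ (1 ≤ j ∧ j ≤ n + 1) := by omega
      rw [dif_neg h, dif_neg h2]

theorem sum_snoc {β : Type*} [Fintype β] (n : ℕ) (f : (Fin (n + 1) → β) → ℝ) :
    ∑ g, f g = ∑ g : Fin n → β, ∑ s, f (Fin.snoc (α := fun _ => β) g s) := by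
  rw [← Equiv.sum_comp (Fin.snocEquiv (fun _ : Fin (n + 1) => β)), Fintype.sum_prod_type,
    Finset.sum_comm]
  rfl

section
variable {S M : ℕ} [NeZero S] [NeZero M] (pi0 : Fin S → ℝ)
    (A : ℕ → Fin S → Fin S → Fin M → ℝ) (B1 : Fin S → Fin M → ℝ)
    (B : ℕ → Fin S → Fin M → Fin M → ℝ)

theorem fanJoint_snoc (n : ℕ) (hn : 1 ≤ n) (z : Fin n → Fin S) (y : Fin n → Fin M)
    (s : Fin S) (m : Fin M) :
    fanJoint pi0 A B1 B (n + 1)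
      (Fin.snoc (α := fun _ => Fin S) z s, Fin.snoc (α := fun _ => Fin M) y m) =
    fanJoint pi0 A B1 B n (z, y) *
      (A (n + 1) (fext n z n) s (fext n y n) * B (n + 1) s m (fext n y n)) := by
  unfold fanJoint
  simp only [fext_snoc]
  rw [Finset.prod_Icc_succ_top (by omega)]
  have h1 : (1 : ℕ) ≠ n + 1 := by omega
  have h2 : n ≠ n + 1 := by omega
  rw [Finset.prod_congr rfl (g := fun j => (A j (fext n z (j - 1)) (fext n z j)
    (fext n y (j - 1)) * B j (fext n z j) (fext n y j) (fext n y (j - 1))))]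
  · simp only [Function.update_of_ne h1, Nat.add_sub_cancel, Function.update_of_ne h2,
      Function.update_self]
    ring
  · intro j hj
    rw [Finset.mem_Icc] at hj
    have h3 : j ≠ n + 1 := by omega
    have h4 : j - 1 ≠ n + 1 := by omega
    simp only [Function.update_of_ne h3, Function.update_of_ne h4]

theorem fanEX_succ (n : ℕ) (hn : 1 ≤ n) (F : (ℕ → Fin S) → (ℕ → Fin M) → ℝ) :
    fanEX pi0 A B1 B (n + 1) F = fanEX pi0 A B1 B n (fun z y => ∑ s, ∑ m,
      A (n + 1) (z n) s (y n) * B (n + 1) s m (y n) *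
        F (Function.update z (n + 1) s) (Function.update y (n + 1) m)) := by
  unfold fanEX
  rw [Fintype.sum_prod_type, Fintype.sum_prod_type, sum_snoc]
  refine Finset.sum_congr rfl fun z _ => ?_
  simp only [sum_snoc (β := Fin M)]
  rw [Finset.sum_comm]
  refine Finset.sum_congr rfl fun y _ => ?_
  rw [Finset.mul_sum]
  refine Finset.sum_congr rfl fun s _ => ?_
  rw [Finset.mul_sum]
  refine Finset.sum_congr rfl fun m _ => ?_
  rw [fanJoint_snoc _ _ _ _ n hn]
  simp only [fext_snoc]
  ring

/-- `F` depends only on times up to `n`. -/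
def DepUpTo {S M : ℕ} (n : ℕ) (F : (ℕ → Fin S) → (ℕ → Fin M) → ℝ) : Prop :=
  ∀ z z' y y', (∀ i, 1 ≤ i → i ≤ n → z i = z' i ∧ y i = y' i) → F z y = F z' y'

theorem fanEX_marg (T n : ℕ) (hn : 1 ≤ n) (hnT : n ≤ T)
    (hA : ∀ j, 2 ≤ j → j ≤ T → ∀ r m, (∑ s, A j r s m) = 1)
    (hB : ∀ j, 2 ≤ j → j ≤ T → ∀ s m', (∑ m, B j s m m') = 1)
    (F : (ℕ → Fin S) → (ℕ → Fin M) → ℝ) (hF : DepUpTo n F) :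
    fanEX pi0 A B1 B T F = fanEX pi0 A B1 B n F := by
  induction T, hnT using Nat.le_induction with
  | base => rfl
  | succ T hT ih =>
    rw [← ih (fun j h1 h2 => hA j h1 (by omega)) (fun j h1 h2 => hB j h1 (by omega)),
      fanEX_succ _ _ _ _ T (by omega)]
    congr 1
    funext z y
    have : ∀ s m, F (Function.update z (T + 1) s) (Function.update y (T + 1) m) = F z y := by
      intro s m
      apply hF
      intro i h1 h2
      have : i ≠ T + 1 := by omega
      simp [Function.update_of_ne this]
    simp only [this, ← Finset.sum_mul, ← Finset.mul_sum, hB (T + 1) (by omega) le_rfl,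
      hA (T + 1) (by omega) le_rfl, mul_one, one_mul]

theorem fanEX_key (T j : ℕ) (hj : 2 ≤ j) (hjT : j ≤ T)
    (hA : ∀ j, 2 ≤ j → j ≤ T → ∀ r m, (∑ s, A j r s m) = 1)
    (hB : ∀ j, 2 ≤ j → j ≤ T → ∀ s m', (∑ m, B j s m m') = 1)
    (G : (ℕ → Fin S) → (ℕ → Fin M) → ℝ) (hG : DepUpTo (j - 1) G) (s : Fin S) (m : Fin M) :
    fanEX pi0 A B1 B T (fun z y => if z j = s ∧ y j = m then G z y else 0) =
    fanEX pi0 A B1 B T (fun z y => A j (z (j - 1)) s (y (j - 1)) *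
      B j s m (y (j - 1)) * G z y) := by
  obtain ⟨n, rfl⟩ : ∃ n, j = n + 1 := ⟨j - 1, by omega⟩
  simp only [Nat.add_sub_cancel] at *
  rw [fanEX_marg _ _ _ _ T (n + 1) (by omega) hjT hA hB,
    fanEX_marg _ _ _ _ T n (by omega) (by omega) hA hB, fanEX_succ _ _ _ _ n (by omega)]
  · congr 1
    funext z y
    have : ∀ s m, G (Function.update z (n + 1) s) (Function.update y (n + 1) m) = G z y := by
      intro s m
      apply hG
      intro i h1 h2
      have : i ≠ n + 1 := by omega
      simp [Function.update_of_ne this]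
    simp only [this, Function.update_self]
    rw [Finset.sum_eq_single s, Finset.sum_eq_single m]
    · simp
    · intro b _ hb; simp [hb]
    · simp
    · intro b _ hb; simp [hb]
    · simp
  · intro z z' y y' h
    simp only [hG z z' y y' h, (h n (by omega) le_rfl).1, (h n (by omega) le_rfl).2]
  · intro z z' y y' h
    simp only [hG z z' y y' fun i h1 h2 => h i h1 (by omega), (h (n + 1) (by omega) le_rfl).1,
      (h (n + 1) (by omega) le_rfl).2]

open Classical in
theorem pr_eq_fanEX (T : ℕ) (E : (ℕ → Fin S) → (ℕ → Fin M) → Prop) :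
    pr (fanJoint pi0 A B1 B T) (fun p => E (fext T p.1) (fext T p.2)) =
    fanEX pi0 A B1 B T (fun z y => if E z y then 1 else 0) := by
  unfold pr fanEX
  refine Finset.sum_congr rfl fun p _ => ?_
  simp

theorem fanEX_sum (T : ℕ) {ι : Type*} (u : Finset ι)
    (F : ι → (ℕ → Fin S) → (ℕ → Fin M) → ℝ) :
    fanEX pi0 A B1 B T (fun z y => ∑ i ∈ u, F i z y) = ∑ i ∈ u, fanEX pi0 A B1 B T (F i) := by
  unfold fanEX
  rw [Finset.sum_comm]
  simp only [Finset.mul_sum]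

theorem fanEX_mul_const (T : ℕ) (c : ℝ) (F : (ℕ → Fin S) → (ℕ → Fin M) → ℝ) :
    fanEX pi0 A B1 B T (fun z y => F z y * c) = fanEX pi0 A B1 B T F * c := by
  unfold fanEX
  rw [Finset.sum_mul]
  simp only [mul_assoc]

end

/-- for a FAN-HMM, 2 ≤ t, k ≥ 1, t + k ≤ T, conditioning only on the
responses y_{1:t-1} (with P(y_{1:t-1}) > 0), the quantities
E_j(s, m) = P(z_j = s, y_j = m | y_{1:t-1}) satisfy
E_t(s, m) = (Σ_r ᾱ_{t-1}(r) A_t(r, s; y_{t-1})) B_t(s, m; y_{t-1}) and, for t < j ≤ t+k,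
E_j(s, m) = Σ_r Σ_{m'} E_{j-1}(r, m') A_j(r, s; m') B_j(s, m; m'); in particular
P(z_{t+k} = s, y_{t+k} = m | y_{1:t-1}) is computed by this recursion without enumerating
the intermediate response and state trajectories. -/
theorem statement_8 {S M : ℕ} [NeZero S] [NeZero M] (T t k : ℕ)
    (ht : 2 ≤ t) (hk : 1 ≤ k) (htk : t + k ≤ T)
    (pi0 : Fin S → ℝ) (A : ℕ → Fin S → Fin S → Fin M → ℝ)
    (B1 : Fin S → Fin M → ℝ) (B : ℕ → Fin S → Fin M → Fin M → ℝ) (y : ℕ → Fin M)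
    (hpi : (∀ s, 0 ≤ pi0 s) ∧ (∑ s, pi0 s) = 1)
    (hA : ∀ j, 2 ≤ j → j ≤ T → ∀ r m, (∀ s, 0 ≤ A j r s m) ∧ (∑ s, A j r s m) = 1)
    (hB1 : ∀ s, (∀ m, 0 ≤ B1 s m) ∧ (∑ m, B1 s m) = 1)
    (hB : ∀ j, 2 ≤ j → j ≤ T → ∀ s m', (∀ m, 0 ≤ B j s m m') ∧ (∑ m, B j s m m') = 1)
    (hpos : 0 < pr (fanJoint pi0 A B1 B T)
        (fun p => ∀ j, 1 ≤ j → j ≤ t - 1 → fext T p.2 j = y j)) :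
    let hist : (Fin T → Fin S) × (Fin T → Fin M) → Prop :=
      fun p => ∀ j, 1 ≤ j → j ≤ t - 1 → fext T p.2 j = y j
    let Efun : ℕ → Fin S → Fin M → ℝ := fun j s m =>
      cpr (fanJoint pi0 A B1 B T) (fun p => fext T p.1 j = s ∧ fext T p.2 j = m) hist
    (∀ (s : Fin S) (m : Fin M),
      Efun t s m =
        (∑ r, cpr (fanJoint pi0 A B1 B T) (fun p => fext T p.1 (t - 1) = r) hist *
            A t r s (y (t - 1))) * B t s m (y (t - 1))) ∧
    (∀ j, t < j → j ≤ t + k → ∀ (s : Fin S) (m : Fin M),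
      Efun j s m = ∑ r, ∑ m', Efun (j - 1) r m' * A j r s m' * B j s m m') := by
  classical
  intro hist Efun
  have hA' : ∀ j, 2 ≤ j → j ≤ T → ∀ r m, (∑ s, A j r s m) = 1 := fun j a b r m => (hA j a b r m).2
  have hB' : ∀ j, 2 ≤ j → j ≤ T → ∀ s m', (∑ m, B j s m m') = 1 :=
    fun j a b r m => (hB j a b r m).2
  let H : (ℕ → Fin S) → (ℕ → Fin M) → Prop := fun _ w => ∀ j, 1 ≤ j → j ≤ t - 1 → w j = y j
  let G : (ℕ → Fin S) → (ℕ → Fin M) → ℝ := fun z w => if H z w then 1 else 0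
  have hG : ∀ n, t - 1 ≤ n → DepUpTo n G := by
    intro n hn z z' w w' h
    have : H z w ↔ H z' w' := by
      refine forall_congr' fun j => forall_congr' fun h1 => forall_congr' fun h2 => ?_
      rw [(h j h1 (by omega)).2]
    simp only [G, this]
  have hE : ∀ j s m, Efun j s m = fanEX pi0 A B1 B T
      (fun z w => if z j = s ∧ w j = m then G z w else 0) / pr (fanJoint pi0 A B1 B T) hist := by
    intro j s m
    change pr _ _ / _ = _
    congr 1
    refine (pr_eq_fanEX pi0 A B1 B T (fun z w => (z j = s ∧ w j = m) ∧ H z w)).trans ?_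
    congr 1
    funext z w
    simp only [G]
    split_ifs <;> first | rfl | (exfalso; tauto)
  have hal : ∀ r, cpr (fanJoint pi0 A B1 B T) (fun p => fext T p.1 (t - 1) = r) hist =
      fanEX pi0 A B1 B T (fun z w => if z (t - 1) = r then G z w else 0) /
        pr (fanJoint pi0 A B1 B T) hist := by
    intro r
    change pr _ _ / _ = _
    congr 1
    refine (pr_eq_fanEX pi0 A B1 B T (fun z w => z (t - 1) = r ∧ H z w)).trans ?_
    congr 1
    funext z w
    simp only [G]
    split_ifs <;> first | rfl | (exfalso; tauto)
  refine ⟨?_, ?_⟩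
  · intro s m
    rw [hE, fanEX_key pi0 A B1 B T t ht (by omega) hA' hB' G (hG _ le_rfl)]
    simp only [hal, div_mul_eq_mul_div, ← Finset.sum_div]
    congr 1
    simp only [← fanEX_mul_const, ← fanEX_sum]
    congr 1
    funext z w
    by_cases h : H z w
    · have hw := h (t - 1) (by omega) le_rfl
      simp [G, h, hw]
    · simp [G, h]
  · intro j hj1 hj2 s m
    simp only [hE]
    rw [fanEX_key pi0 A B1 B T j (by omega) (by omega) hA' hB' G (hG _ (by omega))]
    simp only [div_mul_eq_mul_div, ← Finset.sum_div]
    congr 1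
    simp only [← fanEX_mul_const, ← fanEX_sum]
    congr 1
    funext z w
    rw [Finset.sum_eq_single (z (j - 1)), Finset.sum_eq_single (w (j - 1))]
    · simp; ring
    · intro b _ hb; simp [hb.symm]
    · simp
    · intro b _ hb; simp [hb.symm]
    · simp
end
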